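/- Let 1 < d < D − 1 be integers, let P be an orthogonal projection of rank d on ℂ^D, and let φ ∈ ℂ^D be a fixed unit vector. Let a ≥ 0 satisfy √a < d/D and √a + d/D < 1. Then the Haar probability of the set of U ∈ U(D) with ( ⟨φ, U P U⁻¹ φ⟩ − d/D )² ≥ a equals ((D−1)!/((d−1)!·(D−d−1)!)) · ∫_{[0, d/D − √a] ∪ [d/D + √a, 1]} u^{d−1}·(1−u)^{D−d−1} du. Equivalently, the unitarily invariant probability measure of { φ ∈ S : (‖Pφ‖² − d/D)² ≥ a } equals the same expression. -/

import Mathlib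

open MeasureTheory Filter

noncomputable section

/-- The unitary group U(D) of ℂ^D. -/
abbrev UG (D : ℕ) := Matrix.unitaryGroup (Fin D) ℂ

instance (D : ℕ) : MeasurableSpace (UG D) := borel _
instance (D : ℕ) : BorelSpace (UG D) := ⟨rfl⟩

/-- The squared euclidean norm ‖v‖² on ℂ^D. -/
def nsq {D : ℕ} (v : Fin D → ℂ) : ℝ := ∑ i, ‖v i‖ ^ 2

/-- The hermitian inner product ⟨v,w⟩ on ℂ^D (conjugate-linear in the first variable). -/
def dotc {D : ℕ} (v w : Fin D → ℂ) : ℂ := ∑ i, (starRingEnd ℂ) (v i) * w i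

/-- The orthogonal projection U P U⁻¹ onto the image under U of the range of P. -/
def rotProj {D : ℕ} (U : UG D) (P : Matrix (Fin D) (Fin D) ℂ) : Matrix (Fin D) (Fin D) ℂ :=
  (U : Matrix (Fin D) (Fin D) ℂ) * P * ((U⁻¹ : UG D) : Matrix (Fin D) (Fin D) ℂ)


lemma aux_radial {ι : Type} [Fintype ι] [Nonempty ι] :
    ∃ c : ENNReal, c ≠ 0 ∧ c ≠ ⊤ ∧ ∀ f : ℝ → ENNReal, Measurable f →
      ∫⁻ x : ι → ℂ, f (∑ i, ‖x i‖ ^ 2) =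
        c * ∫⁻ s in Set.Ioi (0:ℝ), ENNReal.ofReal (s ^ (Fintype.card ι - 1)) * f s := by
  classical
  let L : (ι → ℂ) ≃L[ℝ] EuclideanSpace ℂ ι :=
    (PiLp.continuousLinearEquiv 2 ℝ (fun _ : ι => ℂ)).symm
  let _ : MeasurableSpace (EuclideanSpace ℂ ι) := borel _
  have : BorelSpace (EuclideanSpace ℂ ι) := ⟨rfl⟩
  let ν : Measure (EuclideanSpace ℂ ι) := Measure.map L volume
  have : ν.IsAddHaarMeasure := L.isAddHaarMeasure_map _
  have : Nontrivial (EuclideanSpace ℂ ι) := inferInstance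
  have hdim : Module.finrank ℝ (EuclideanSpace ℂ ι) = 2 * Fintype.card ι := by
    rw [← L.toLinearEquiv.finrank_eq]
    simp [Module.finrank_pi_fintype, mul_comm]
  have hn : 0 < Fintype.card ι := Fintype.card_pos
  set n := Fintype.card ι with hnd
  refine ⟨ν.toSphere Set.univ / 2, ?_, ?_, ?_⟩
  · rw [Measure.toSphere_apply_univ, hdim]
    have : ν (Metric.ball 0 1) ≠ 0 := (Metric.measure_ball_pos ν 0 one_pos).ne'
    simp [this]
    omega
  · exact ENNReal.div_ne_top (measure_ne_top _ _) (by simp)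
  intro f hf
  have hsub : ∫⁻ s in Set.Ioi (0:ℝ), ENNReal.ofReal (s ^ (n - 1)) * f s =
      ∫⁻ y in Set.Ioi (0:ℝ), 2 * (ENNReal.ofReal (y ^ (2 * n - 1)) * f (y ^ 2)) := by
    have him : (fun y : ℝ => y ^ 2) '' Set.Ioi 0 = Set.Ioi 0 := by
      ext s
      constructor
      · rintro ⟨y, hy, rfl⟩
        exact pow_pos (Set.mem_Ioi.1 hy) 2
      · intro hs
        exact ⟨Real.sqrt s, Real.sqrt_pos.2 hs, Real.sq_sqrt (le_of_lt hs)⟩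
    have := lintegral_image_eq_lintegral_abs_deriv_mul (f := fun y : ℝ => y ^ 2)
      (f' := fun y => 2 * y) (measurableSet_Ioi (a := (0:ℝ)))
      (fun x _ => by simpa using (hasDerivAt_pow 2 x).hasDerivWithinAt)
      (fun x hx y hy h => by
        have := (pow_left_inj₀ (le_of_lt hx) (le_of_lt hy) two_ne_zero).1 h
        exact this)
      (fun s => ENNReal.ofReal (s ^ (n - 1)) * f s)
    rw [him] at this
    rw [this]
    refine setLIntegral_congr_fun measurableSet_Ioi fun y hy => ?_
    have hy' : (0:ℝ) < y := hy
    rw [← mul_assoc, ← mul_assoc]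
    congr 1
    rw [abs_of_pos (by positivity), ← ENNReal.ofReal_mul (by positivity)]
    rw [show (2 : ENNReal) = ENNReal.ofReal 2 by simp, ← ENNReal.ofReal_mul (by positivity)]
    congr 1
    obtain ⟨k, hk⟩ : ∃ k, n = k + 1 := ⟨n - 1, by omega⟩
    rw [hk, show 2 * (k + 1) - 1 = 2 * k + 1 by omega]
    simp [pow_succ, pow_mul]
    ring
  have h1 : ∫⁻ x : ι → ℂ, f (∑ i, ‖x i‖ ^ 2) = ∫⁻ x, f (‖x‖ ^ 2) ∂ν := by
    rw [lintegral_map (by fun_prop) L.continuous.measurable]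
    refine lintegral_congr fun x => ?_
    rw [EuclideanSpace.norm_sq_eq]
    rfl
  rw [h1, hsub, lintegral_const_mul _ (by fun_prop), ← mul_assoc,
    ENNReal.div_mul_cancel (by simp) (by simp)]
  have h2 : ∫⁻ x, f (‖x‖ ^ 2) ∂ν
      = ∫⁻ x : ({(0)}ᶜ : Set (EuclideanSpace ℂ ι)), f (‖x.1‖ ^ 2) ∂(ν.comap (↑)) := by
    rw [lintegral_subtype_comap (measurableSet_singleton _).compl fun x ↦ f (‖x‖ ^ 2),
        restrict_compl_singleton]
  have h3 := ν.measurePreserving_homeomorphUnitSphereProd.lintegral_comp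
    (f := fun z => f ((z.2 : ℝ) ^ 2)) (by fun_prop)
  simp only [homeomorphUnitSphereProd_apply_snd_coe] at h3
  rw [h2, h3, lintegral_prod _ (by fun_prop)]
  simp only [lintegral_const]
  rw [mul_comm]
  congr 1
  rw [Measure.volumeIoiPow, lintegral_withDensity_eq_lintegral_mul _ (by fun_prop) (by fun_prop),
    hdim]
  simp only [Pi.mul_apply]
  exact lintegral_subtype_comap measurableSet_Ioi
    fun y : ℝ => ENNReal.ofReal (y ^ (2 * n - 1)) * f (y ^ 2)

lemma aux_beta (p q : ℕ) (h : ℝ → ENNReal) (hh : Measurable h) :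
    ∫⁻ s in Set.Ioi (0:ℝ), ∫⁻ t in Set.Ioi (0:ℝ),
      ENNReal.ofReal (s ^ p) * (ENNReal.ofReal (t ^ q) *
        (ENNReal.ofReal (Real.exp (-(s + t))) * h (s / (s + t)))) =
    (∫⁻ r in Set.Ioi (0:ℝ), ENNReal.ofReal (r ^ (p + q + 1) * Real.exp (-r))) *
      ∫⁻ u in Set.Ioo (0:ℝ) 1, ENNReal.ofReal (u ^ p * (1 - u) ^ q) * h u := by
  let S : Set (ℝ × ℝ) := {z | 0 < z.1 ∧ z.1 < z.2}
  have hS : MeasurableSet S :=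
    (measurableSet_lt measurable_const measurable_fst).inter
      (measurableSet_lt measurable_fst measurable_snd)
  let K : ℝ × ℝ → ENNReal := S.indicator fun z =>
    ENNReal.ofReal (z.1 ^ p) * (ENNReal.ofReal ((z.2 - z.1) ^ q) *
        (ENNReal.ofReal (Real.exp (-z.2)) * h (z.1 / z.2)))
  have hK : Measurable K := by
    refine Measurable.indicator ?_ hS
    fun_prop
  have e1 : ∫⁻ s in Set.Ioi (0:ℝ), ∫⁻ t in Set.Ioi (0:ℝ),
      ENNReal.ofReal (s ^ p) * (ENNReal.ofReal (t ^ q) *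
        (ENNReal.ofReal (Real.exp (-(s + t))) * h (s / (s + t)))) = ∫⁻ s, ∫⁻ t, K (s, s + t) := by
    rw [← lintegral_indicator measurableSet_Ioi]
    refine lintegral_congr fun s => ?_
    by_cases hs : 0 < s
    · rw [Set.indicator_of_mem (by exact hs), ← lintegral_indicator measurableSet_Ioi]
      refine lintegral_congr fun t => ?_
      by_cases ht : 0 < t
      · simp [K, S, hs, ht]
      · simp [K, S, ht]
    · rw [Set.indicator_of_notMem (by exact hs)]
      simp [K, S, hs]
  have e2 : ∀ s, ∫⁻ t, K (s, s + t) = ∫⁻ r, K (s, r) := fun s =>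
    lintegral_add_left_eq_self (μ := volume) (fun r => K (s, r)) s
  rw [e1]
  simp_rw [e2]
  rw [lintegral_lintegral_swap (f := fun s r => K (s, r)) hK.aemeasurable, ← lintegral_mul_const _ (by fun_prop),
    ← lintegral_indicator measurableSet_Ioi]
  refine lintegral_congr fun r => ?_
  by_cases hr : 0 < r
  · rw [Set.indicator_of_mem (by exact hr)]
    have hm := Real.smul_map_volume_mul_left hr.ne'
    conv_lhs => rw [← hm]
    rw [lintegral_smul_measure, lintegral_map (by fun_prop) (by fun_prop), abs_of_pos hr,
      smul_eq_mul, ← lintegral_const_mul _ (by fun_prop), ← lintegral_const_mul _ (by fun_prop),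
      ← lintegral_indicator measurableSet_Ioo]
    refine lintegral_congr fun u => ?_
    by_cases hu : u ∈ Set.Ioo (0:ℝ) 1
    · rw [Set.indicator_of_mem hu]
      have hu' : (r * u, r) ∈ S := ⟨mul_pos hr hu.1, by
        have := mul_lt_mul_of_pos_left hu.2 hr
        simpa using this⟩
      have h1u : 0 < 1 - u := by linarith [hu.2]
      have h0u := hu.1
      have hdiv : r * u / r = u := by field_simp
      simp only [K]
      rw [Set.indicator_of_mem hu']
      simp only [hdiv]
      simp only [← mul_assoc]
      congr 1
      have hx : 0 ≤ r - r * u := by nlinarith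
      rw [← ENNReal.ofReal_mul (by positivity), ← ENNReal.ofReal_mul (by positivity),
        ← ENNReal.ofReal_mul (by positivity), ← ENNReal.ofReal_mul (by positivity)]
      congr 1
      rw [show r - r * u = r * (1 - u) by ring, mul_pow, mul_pow]
      ring
    · rw [Set.indicator_of_notMem hu]
      have : (r * u, r) ∉ S := by
        rintro ⟨h1, h2⟩
        simp only at h1 h2
        refine hu ⟨pos_of_mul_pos_right h1 hr.le |> fun h => h, ?_⟩
        by_contra hc
        nlinarith
      simp [K, this]
  · rw [Set.indicator_of_notMem (by exact hr)]
    have : ∀ s, K (s, r) = 0 := fun s => by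
      refine Set.indicator_of_notMem ?_ _
      rintro ⟨h1, h2⟩
      exact hr (lt_trans h1 h2)
    simp [this]

lemma aux_gamma (k : ℕ) :
    ∫⁻ r in Set.Ioi (0:ℝ), ENNReal.ofReal (r ^ k * Real.exp (-r)) =
      ENNReal.ofReal (Nat.factorial k) := by
  have hi := Real.GammaIntegral_convergent (s := (k:ℝ) + 1) (by positivity)
  have he : Set.EqOn (fun x : ℝ => Real.exp (-x) * x ^ ((k:ℝ) + 1 - 1))
      (fun r => r ^ k * Real.exp (-r)) (Set.Ioi 0) := by
    intro x hx
    simp [mul_comm]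
  rw [← ofReal_integral_eq_lintegral_ofReal]
  · rw [← Real.Gamma_nat_eq_factorial, Real.Gamma_eq_integral (by positivity),
      setIntegral_congr_fun measurableSet_Ioi he]
  · exact hi.congr_fun he measurableSet_Ioi
  · filter_upwards [self_mem_ae_restrict measurableSet_Ioi] with x hx
    have : (0:ℝ) < x := hx
    positivity

lemma aux_beta_value (p q : ℕ) :
    ∫⁻ u in Set.Ioo (0:ℝ) 1, ENNReal.ofReal (u ^ p * (1 - u) ^ q) =
      ENNReal.ofReal ((Nat.factorial p * Nat.factorial q : ℝ) / Nat.factorial (p + q + 1)) := by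
  have h := aux_beta p q (fun _ => 1) measurable_const
  rw [aux_gamma] at h
  have hl : ∫⁻ s in Set.Ioi (0:ℝ), ∫⁻ t in Set.Ioi (0:ℝ),
      ENNReal.ofReal (s ^ p) * (ENNReal.ofReal (t ^ q) *
        (ENNReal.ofReal (Real.exp (-(s + t))) * 1)) =
      ENNReal.ofReal (Nat.factorial p) * ENNReal.ofReal (Nat.factorial q) := by
    rw [← aux_gamma p, ← aux_gamma q, ← lintegral_mul_const _ (by fun_prop)]
    refine setLIntegral_congr_fun measurableSet_Ioi fun s hs => ?_
    have hs' : (0:ℝ) < s := hs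
    rw [← lintegral_const_mul _ (by fun_prop)]
    refine setLIntegral_congr_fun measurableSet_Ioi fun t ht => ?_
    have ht' : (0:ℝ) < t := ht
    simp only [mul_one]
    rw [← ENNReal.ofReal_mul (by positivity), ← ENNReal.ofReal_mul (by positivity),
      ← ENNReal.ofReal_mul (by positivity), neg_add, Real.exp_add]
    congr 1
    ring
  rw [hl, ← ENNReal.ofReal_mul (by positivity)] at h
  simp only [mul_one] at h
  rw [ENNReal.ofReal_div_of_pos (by positivity), h, mul_comm, ENNReal.mul_div_cancel_right]
  · simp [Nat.factorial_ne_zero]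
  · simp

lemma aux_gauss {D : ℕ} (p : Fin D → Prop) [DecidablePred p] (k l : ℕ)
    (hk : Fintype.card {i // p i} = k + 1) (hl : Fintype.card {i // ¬ p i} = l + 1) :
    ∃ C : ENNReal, C ≠ 0 ∧ C ≠ ⊤ ∧ ∀ h : ℝ → ENNReal, Measurable h →
      ∫⁻ v : Fin D → ℂ, ENNReal.ofReal (Real.exp (-nsq v)) *
        h ((∑ i : {i // p i}, ‖v i‖ ^ 2) / nsq v) =
      C * ∫⁻ u in Set.Ioo (0:ℝ) 1, ENNReal.ofReal (u ^ k * (1 - u) ^ l) * h u := by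
  have n1 : Nonempty {i // p i} := Fintype.card_pos_iff.1 (by omega)
  have n2 : Nonempty {i // ¬ p i} := Fintype.card_pos_iff.1 (by omega)
  obtain ⟨c1, c10, c1t, hc1⟩ := aux_radial (ι := {i // p i})
  obtain ⟨c2, c20, c2t, hc2⟩ := aux_radial (ι := {i // ¬ p i})
  refine ⟨c1 * c2 * ENNReal.ofReal (Nat.factorial (k + l + 1)), ?_, ?_, ?_⟩
  · simp [c10, c20, Nat.factorial_ne_zero]
  · exact ENNReal.mul_ne_top (ENNReal.mul_ne_top c1t c2t) ENNReal.ofReal_ne_top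
  intro h hh
  have hmp := volume_preserving_piEquivPiSubtypeProd (fun _ : Fin D => ℂ) p
  have hsum : ∀ v : Fin D → ℂ, nsq v =
      (∑ i : {i // p i}, ‖v i‖ ^ 2) + ∑ i : {i // ¬ p i}, ‖v i‖ ^ 2 := fun v =>
    (Fintype.sum_subtype_add_sum_subtype p (fun i => ‖v i‖ ^ 2)).symm
  have e1 := hmp.lintegral_comp (f := fun z : ({i // p i} → ℂ) × ({i // ¬ p i} → ℂ) =>
    ENNReal.ofReal (Real.exp (-((∑ i, ‖z.1 i‖ ^ 2) + ∑ i, ‖z.2 i‖ ^ 2))) *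
      h ((∑ i, ‖z.1 i‖ ^ 2) / ((∑ i, ‖z.1 i‖ ^ 2) + ∑ i, ‖z.2 i‖ ^ 2))) (by fun_prop)
  refine Eq.trans (Eq.trans (lintegral_congr fun v => ?_) e1) ?_
  · rw [hsum v]
    rfl
  rw [Measure.volume_eq_prod, lintegral_prod _ (by fun_prop)]
  simp only
  have e3 : ∀ x : {i // p i} → ℂ, ∫⁻ y : {i // ¬ p i} → ℂ,
      ENNReal.ofReal (Real.exp (-((∑ i, ‖x i‖ ^ 2) + ∑ i, ‖y i‖ ^ 2))) *
      h ((∑ i, ‖x i‖ ^ 2) / ((∑ i, ‖x i‖ ^ 2) + ∑ i, ‖y i‖ ^ 2)) = _ := fun x =>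
    hc2 (fun t => ENNReal.ofReal (Real.exp (-((∑ i, ‖x i‖ ^ 2) + t))) *
      h ((∑ i, ‖x i‖ ^ 2) / ((∑ i, ‖x i‖ ^ 2) + t))) (by fun_prop)
  simp_rw [e3]
  have hm : Measurable fun s : ℝ => ∫⁻ t in Set.Ioi (0:ℝ),
      ENNReal.ofReal (t ^ (Fintype.card {i // ¬ p i} - 1)) *
        (ENNReal.ofReal (Real.exp (-(s + t))) * h (s / (s + t))) := by
    refine Measurable.lintegral_prod_right' (f := fun z : ℝ × ℝ =>
      ENNReal.ofReal (z.2 ^ (Fintype.card {i // ¬ p i} - 1)) *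
        (ENNReal.ofReal (Real.exp (-(z.1 + z.2))) * h (z.1 / (z.1 + z.2)))) ?_
    fun_prop
  refine (hc1 (fun s => c2 * ∫⁻ t in Set.Ioi (0:ℝ),
      ENNReal.ofReal (t ^ (Fintype.card {i // ¬ p i} - 1)) *
        (ENNReal.ofReal (Real.exp (-(s + t))) * h (s / (s + t)))) (hm.const_mul c2)).trans ?_
  rw [mul_assoc c1, mul_assoc c1, ← aux_gamma, mul_assoc c2, ← aux_beta k l h hh]
  congr 1
  rw [hk] 
  simp only [hl, Nat.add_sub_cancel] at hm ⊢
  rw [← lintegral_const_mul]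
  · refine lintegral_congr fun s => ?_
    rw [lintegral_const_mul _ (by fun_prop), mul_left_comm]
  · refine Measurable.lintegral_prod_right' (f := fun z : ℝ × ℝ =>
      ENNReal.ofReal (z.1 ^ k) * (ENNReal.ofReal (z.2 ^ l) *
        (ENNReal.ofReal (Real.exp (-(z.1 + z.2))) * h (z.1 / (z.1 + z.2))))) ?_
    fun_prop

instance aux_sc (D : ℕ) : SecondCountableTopology (UG D) := by
  have : SecondCountableTopology (Matrix (Fin D) (Fin D) ℂ) :=
    inferInstanceAs (SecondCountableTopology (Fin D → Fin D → ℂ))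
  exact TopologicalSpace.Subtype.secondCountableTopology _

lemma aux_cont (D : ℕ) : Continuous fun z : UG D × (Fin D → ℂ) =>
    ((z.1⁻¹ : UG D) : Matrix (Fin D) (Fin D) ℂ).mulVec z.2 := by
  refine Continuous.matrix_mulVec ?_ continuous_snd
  exact continuous_subtype_val.comp (continuous_inv.comp continuous_fst)

lemma aux_nsq_norm {D : ℕ} (v : Fin D → ℂ) : nsq v = ‖WithLp.toLp 2 v‖ ^ 2 := by
  rw [EuclideanSpace.norm_sq_eq]; rfl

lemma aux_nsq_dot {D : ℕ} (v : Fin D → ℂ) : ((nsq v : ℝ) : ℂ) = dotProduct (star v) v := by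
  simp [nsq, dotProduct, Complex.conj_mul']

lemma aux_nsq_unitary {D : ℕ} (U : UG D) (v : Fin D → ℂ) :
    nsq ((U : Matrix (Fin D) (Fin D) ℂ).mulVec v) = nsq v := by
  have hU : (U : Matrix (Fin D) (Fin D) ℂ).conjTranspose * U = 1 :=
    Matrix.mem_unitaryGroup_iff'.1 U.2
  have : ((nsq ((U : Matrix (Fin D) (Fin D) ℂ).mulVec v) : ℝ) : ℂ) = nsq v := by
    rw [aux_nsq_dot, aux_nsq_dot, Matrix.star_mulVec, Matrix.dotProduct_mulVec,
      Matrix.vecMul_vecMul, hU, Matrix.vecMul_one]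
  exact_mod_cast this

lemma aux_trans {D : ℕ} (v w : Fin D → ℂ) (hv : nsq v = 1) (hw : nsq w = 1) :
    ∃ V : UG D, (V : Matrix (Fin D) (Fin D) ℂ).mulVec v = w := by
  classical
  have hD : 0 < D := by
    rcases Nat.eq_zero_or_pos D with h | h
    · subst h; simp [nsq] at hv
    · exact h
  let i0 : Fin D := ⟨0, hD⟩
  have ext : ∀ v : Fin D → ℂ, nsq v = 1 → ∃ V : UG D,
      (V : Matrix (Fin D) (Fin D) ℂ).mulVec (Pi.single i0 1) = v := by
    intro v hv
    have hn : ‖WithLp.toLp 2 v‖ = 1 := by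
      have := aux_nsq_norm v
      rw [hv] at this
      nlinarith [norm_nonneg (WithLp.toLp 2 v)]
    have ho : Orthonormal ℂ (({i0} : Set (Fin D)).restrict
        (fun _ : Fin D => (WithLp.toLp 2 v : EuclideanSpace ℂ (Fin D)))) := by
      constructor
      · intro i; exact hn
      · intro i j hij
        exact absurd (Subsingleton.elim i j) hij
    obtain ⟨b, hb⟩ := ho.exists_orthonormalBasis_extension_of_card_eq (by simp)
    refine ⟨⟨(EuclideanSpace.basisFun (Fin D) ℂ).toBasis.toMatrix b,
      (EuclideanSpace.basisFun (Fin D) ℂ).toMatrix_orthonormalBasis_mem_unitary b⟩, ?_⟩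
    ext j
    have := hb i0 rfl
    simp [Module.Basis.toMatrix_apply, this]
  obtain ⟨V, hV⟩ := ext v hv
  obtain ⟨W, hW⟩ := ext w hw
  refine ⟨W * V⁻¹, ?_⟩
  rw [← hV, ← hW, Matrix.mulVec_mulVec]
  congr 1
  rw [← Matrix.UnitaryGroup.mul_val]
  simp

lemma aux_key {D : ℕ} (μ : Measure (UG D)) [μ.IsHaarMeasure] [IsProbabilityMeasure μ]
    (w : Measure (Fin D → ℂ)) [SFinite w]
    (hinv : ∀ U : UG D,
      Measure.map (fun v => (U : Matrix (Fin D) (Fin D) ℂ).mulVec v) w = w)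
    (h0 : w {0} = 0) (A : Set (Fin D → ℂ)) (hA : MeasurableSet A)
    (hsc : ∀ (c : ℂ) (v : Fin D → ℂ), c ≠ 0 → v ∈ A → c • v ∈ A)
    (φ : Fin D → ℂ) (hφ : nsq φ = 1) :
    w A = μ {U : UG D | ((U⁻¹ : UG D) : Matrix (Fin D) (Fin D) ℂ).mulVec φ ∈ A} * w Set.univ := by
  have hm := (aux_cont D).measurable
  have hT : MeasurableSet {z : UG D × (Fin D → ℂ) |
    ((z.1⁻¹ : UG D) : Matrix (Fin D) (Fin D) ℂ).mulVec z.2 ∈ A} := hm hA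
  have e1 : (μ.prod w) {z : UG D × (Fin D → ℂ) |
    ((z.1⁻¹ : UG D) : Matrix (Fin D) (Fin D) ℂ).mulVec z.2 ∈ A} = w A := by
    rw [Measure.prod_apply hT]
    have : ∀ U : UG D, w (Prod.mk U ⁻¹' {z : UG D × (Fin D → ℂ) |
      ((z.1⁻¹ : UG D) : Matrix (Fin D) (Fin D) ℂ).mulVec z.2 ∈ A}) = w A := by
      intro U
      conv_rhs => rw [← hinv U⁻¹]
      rw [Measure.map_apply _ hA]
      · rfl
      · exact (Continuous.matrix_mulVec continuous_const continuous_id).measurable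
    rw [lintegral_congr this]
    simp
  rw [← e1, Measure.prod_apply_symm hT]
  have hone : ∀ v : Fin D → ℂ, v ≠ 0 → μ ((fun U => (U, v)) ⁻¹' {z : UG D × (Fin D → ℂ) |
      ((z.1⁻¹ : UG D) : Matrix (Fin D) (Fin D) ℂ).mulVec z.2 ∈ A}) =
      μ {U : UG D | ((U⁻¹ : UG D) : Matrix (Fin D) (Fin D) ℂ).mulVec φ ∈ A} := by
    intro v hv
    have hr : 0 < ‖WithLp.toLp 2 v‖ := by
      rw [norm_pos_iff]
      intro h
      exact hv (by simpa using h)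
    set r := ‖WithLp.toLp 2 v‖ with hrd
    have hrc : (r : ℂ) ≠ 0 := by exact_mod_cast hr.ne'
    have hu : nsq ((r : ℂ)⁻¹ • v) = 1 := by
      rw [aux_nsq_norm, WithLp.toLp_smul, norm_smul, ← hrd]
      simp [abs_of_pos hr, hr.ne']
    obtain ⟨V, hV⟩ := aux_trans φ _ hφ hu
    have hv' : v = (r : ℂ) • (V : Matrix (Fin D) (Fin D) ℂ).mulVec φ := by
      rw [hV, smul_smul, mul_inv_cancel₀ hrc, one_smul]
    conv_rhs => rw [← measure_preimage_mul μ V⁻¹]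
    congr 1
    ext U
    simp only [Set.mem_preimage, Set.mem_setOf_eq]
    have heq : (((V⁻¹ * U)⁻¹ : UG D) : Matrix (Fin D) (Fin D) ℂ).mulVec φ =
        ((U⁻¹ : UG D) : Matrix (Fin D) (Fin D) ℂ).mulVec
          ((V : Matrix (Fin D) (Fin D) ℂ).mulVec φ) := by
      rw [Matrix.mulVec_mulVec, ← Matrix.UnitaryGroup.mul_val]
      simp
    rw [heq, hv', Matrix.mulVec_smul]
    constructor
    · intro h
      have := hsc (r : ℂ)⁻¹ _ (inv_ne_zero hrc) h
      rwa [smul_smul, inv_mul_cancel₀ hrc, one_smul] at this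
    · exact hsc _ _ hrc
  rw [lintegral_congr_ae (g := fun _ => μ {U : UG D |
    ((U⁻¹ : UG D) : Matrix (Fin D) (Fin D) ℂ).mulVec φ ∈ A})]
  · simp
  · have : ∀ᵐ v ∂w, v ≠ 0 := by
      rw [ae_iff]; simpa using h0
    filter_upwards [this] with v hv using hone v hv

lemma aux_nsq_meas {D : ℕ} : Measurable (nsq : (Fin D → ℂ) → ℝ) := by
  unfold nsq
  fun_prop

lemma aux_mulVec_meas {D : ℕ} (M : Matrix (Fin D) (Fin D) ℂ) : Measurable fun v => M.mulVec v :=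
  (Continuous.matrix_mulVec continuous_const continuous_id).measurable

/-- unnormalized Gaussian measure -/
def auxG (D : ℕ) : Measure (Fin D → ℂ) :=
  volume.withDensity fun v => ENNReal.ofReal (Real.exp (-nsq v))

lemma aux_dens_meas {D : ℕ} :
    Measurable fun v : Fin D → ℂ => ENNReal.ofReal (Real.exp (-nsq v)) := by
  have := aux_nsq_meas (D := D)
  fun_prop

lemma aux_vol_inv {D : ℕ} (h0 : ∫⁻ v : Fin D → ℂ, ENNReal.ofReal (Real.exp (-nsq v)) ≠ 0)
    (ht : ∫⁻ v : Fin D → ℂ, ENNReal.ofReal (Real.exp (-nsq v)) ≠ ⊤) (U : UG D) :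
    Measure.map (fun v => (U : Matrix (Fin D) (Fin D) ℂ).mulVec v) (volume : Measure (Fin D → ℂ))
      = volume := by
  let L : (Fin D → ℂ) ≃+ (Fin D → ℂ) :=
    { toFun := fun v => (U : Matrix (Fin D) (Fin D) ℂ).mulVec v
      invFun := fun v => ((U⁻¹ : UG D) : Matrix (Fin D) (Fin D) ℂ).mulVec v
      left_inv := fun v => by
        simp only [Matrix.mulVec_mulVec]
        rw [← Matrix.UnitaryGroup.mul_val]; simp
      right_inv := fun v => by
        simp only [Matrix.mulVec_mulVec]
        rw [← Matrix.UnitaryGroup.mul_val]; simp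
      map_add' := fun v w => Matrix.mulVec_add _ _ _ }
  have c1 : Continuous L := Continuous.matrix_mulVec continuous_const continuous_id
  have c2 : Continuous L.symm := Continuous.matrix_mulVec continuous_const continuous_id
  have hH : (Measure.map L (volume : Measure (Fin D → ℂ))).IsAddHaarMeasure :=
    L.isAddHaarMeasure_map _ c1 c2
  change Measure.map L volume = volume
  have he := Measure.isAddLeftInvariant_eq_smul (Measure.map L (volume : Measure (Fin D → ℂ))) volume
  set c := Measure.addHaarScalarFactor (Measure.map L (volume : Measure (Fin D → ℂ))) volume
  have h1 : ∫⁻ v, ENNReal.ofReal (Real.exp (-nsq v)) ∂(Measure.map L volume) =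
      ∫⁻ v : Fin D → ℂ, ENNReal.ofReal (Real.exp (-nsq v)) := by
    rw [lintegral_map aux_dens_meas c1.measurable]
    refine lintegral_congr fun v => ?_
    rw [show nsq (L v) = nsq v from aux_nsq_unitary U v]
  rw [he, lintegral_smul_measure] at h1
  have hc : (c : ENNReal) = 1 := by
    have h1' : (c : ENNReal) * ∫⁻ v : Fin D → ℂ, ENNReal.ofReal (Real.exp (-nsq v)) =
      1 * ∫⁻ v : Fin D → ℂ, ENNReal.ofReal (Real.exp (-nsq v)) := by
      rw [one_mul]; exact h1
    exact (ENNReal.mul_left_inj h0 ht).1 h1'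
  have hc' : c = 1 := by exact_mod_cast hc
  rw [he, hc', one_smul]

lemma aux_G_inv {D : ℕ} (h0 : ∫⁻ v : Fin D → ℂ, ENNReal.ofReal (Real.exp (-nsq v)) ≠ 0)
    (ht : ∫⁻ v : Fin D → ℂ, ENNReal.ofReal (Real.exp (-nsq v)) ≠ ⊤) (U : UG D) :
    Measure.map (fun v => (U : Matrix (Fin D) (Fin D) ℂ).mulVec v) (auxG D) = auxG D := by
  have hm := aux_mulVec_meas (U : Matrix (Fin D) (Fin D) ℂ)
  ext A hA
  rw [Measure.map_apply hm hA, auxG, withDensity_apply _ hA, withDensity_apply _ (hm hA)]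
  conv_rhs => rw [← aux_vol_inv h0 ht U]
  rw [setLIntegral_map hA aux_dens_meas hm]
  simp only [aux_nsq_unitary]

lemma aux_diag {D : ℕ} (P : Matrix (Fin D) (Fin D) ℂ) (hP1 : P * P = P) (hP2 : P.IsHermitian) :
    ∃ (V : UG D) (p : Fin D → Prop) (_ : DecidablePred p), Fintype.card {i // p i} = P.rank ∧
      ∀ v, nsq (P.mulVec v) =
        ∑ i : {i // p i}, ‖(V : Matrix (Fin D) (Fin D) ℂ).mulVec v i‖ ^ 2 := by
  classical
  have hs := hP2.spectral_theorem
  rw [Unitary.conjStarAlgAut_apply] at hs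
  set W : UG D := hP2.eigenvectorUnitary with hW
  set Λ : Matrix (Fin D) (Fin D) ℂ := Matrix.diagonal (RCLike.ofReal ∘ hP2.eigenvalues) with hΛ
  have hw1 : ((W⁻¹ : UG D) : Matrix (Fin D) (Fin D) ℂ) * W = 1 := by
    rw [← Matrix.UnitaryGroup.mul_val]; simp
  have hs' : P = W * Λ * ((W⁻¹ : UG D) : Matrix (Fin D) (Fin D) ℂ) := hs
  have hΛP : Λ = ((W⁻¹ : UG D) : Matrix (Fin D) (Fin D) ℂ) * P * W := by
    conv_rhs => rw [hs']
    calc Λ = 1 * Λ * 1 := by simp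
      _ = _ := by rw [← hw1]; simp only [mul_assoc]
  have hΛ2 : Λ * Λ = Λ := by
    have hw2 : (W : Matrix (Fin D) (Fin D) ℂ) * ((W⁻¹ : UG D) : Matrix (Fin D) (Fin D) ℂ) = 1 := by
      rw [← Matrix.UnitaryGroup.mul_val]; simp
    calc Λ * Λ = ((W⁻¹ : UG D) : Matrix (Fin D) (Fin D) ℂ) * P *
          ((W : Matrix (Fin D) (Fin D) ℂ) * ((W⁻¹ : UG D) : Matrix (Fin D) (Fin D) ℂ)) * P * W := by
          rw [hΛP]; simp only [mul_assoc]
      _ = Λ := by rw [hw2, mul_one, mul_assoc _ P P, hP1, ← hΛP]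
  have hev : ∀ i, hP2.eigenvalues i ≠ 0 → hP2.eigenvalues i = 1 := by
    intro i hi
    have := congrFun (congrFun hΛ2 i) i
    rw [hΛ, Matrix.diagonal_mul_diagonal] at this
    simp only [Matrix.diagonal_apply_eq, Function.comp] at this
    have h2 : hP2.eigenvalues i * hP2.eigenvalues i = hP2.eigenvalues i := by
      exact_mod_cast this
    exact mul_right_cancel₀ hi (by rw [h2, one_mul])
  refine ⟨W⁻¹, fun i => hP2.eigenvalues i ≠ 0, inferInstance, ?_, ?_⟩
  · rw [hP2.rank_eq_card_non_zero_eigs]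
  · intro v
    conv_lhs => rw [hs', mul_assoc, ← Matrix.mulVec_mulVec, aux_nsq_unitary,
      ← Matrix.mulVec_mulVec]
    unfold nsq
    rw [← Fintype.sum_subtype_add_sum_subtype (fun i => hP2.eigenvalues i ≠ 0)]
    have hz : ∑ i : {i // ¬ hP2.eigenvalues i ≠ 0},
        ‖Λ.mulVec (((W⁻¹ : UG D) : Matrix (Fin D) (Fin D) ℂ).mulVec v) i‖ ^ 2 = 0 := by
      refine Finset.sum_eq_zero fun i _ => ?_
      have := i.2
      push Not at this
      rw [hΛ, Matrix.mulVec_diagonal]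
      simp [this]
    rw [hz, add_zero]
    refine Finset.sum_congr rfl fun i _ => ?_
    rw [hΛ, Matrix.mulVec_diagonal]
    simp [hev i i.2]

lemma aux_rot {D : ℕ} (P : Matrix (Fin D) (Fin D) ℂ) (hP1 : P * P = P) (hP2 : P.IsHermitian)
    (U : UG D) (φ : Fin D → ℂ) : (dotc φ ((rotProj U P).mulVec φ)).re =
      nsq (P.mulVec (((U⁻¹ : UG D) : Matrix (Fin D) (Fin D) ℂ).mulVec φ)) := by
  have : dotc φ ((rotProj U P).mulVec φ) =
      ((nsq (P.mulVec (((U⁻¹ : UG D) : Matrix (Fin D) (Fin D) ℂ).mulVec φ)) : ℝ) : ℂ) := by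
    rw [aux_nsq_dot, Matrix.mulVec_mulVec, Matrix.star_mulVec, Matrix.dotProduct_mulVec,
      Matrix.vecMul_vecMul, Matrix.conjTranspose_mul, hP2.eq, ← Matrix.dotProduct_mulVec]
    have hU : (((U⁻¹ : UG D) : Matrix (Fin D) (Fin D) ℂ)).conjTranspose = U := by
      change star (star (U : Matrix (Fin D) (Fin D) ℂ)) = U
      exact star_star _
    rw [hU, mul_assoc, ← mul_assoc P P, hP1, ← mul_assoc]
    rfl
  rw [this, Complex.ofReal_re]

lemma aux_main (D k l : ℕ) (hD : k + l + 2 = D)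
    (P : Matrix (Fin D) (Fin D) ℂ) (hP1 : P * P = P) (hP2 : P.IsHermitian) (hPr : P.rank = k + 1)
    (φ : Fin D → ℂ) (hφ : nsq φ = 1) (B : Set ℝ) (hB : MeasurableSet B)
    (μ : Measure (UG D)) [μ.IsHaarMeasure] [IsProbabilityMeasure μ] :
    μ {U : UG D | ((U⁻¹ : UG D) : Matrix (Fin D) (Fin D) ℂ).mulVec φ ∈
      {v : Fin D → ℂ | nsq (P.mulVec v) / nsq v ∈ B}} *
        ENNReal.ofReal ((Nat.factorial k * Nat.factorial l : ℝ) / Nat.factorial (k + l + 1)) =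
      ∫⁻ u in Set.Ioo (0:ℝ) 1 ∩ B, ENNReal.ofReal (u ^ k * (1 - u) ^ l) := by
  obtain ⟨V, p, hdec, hcard, hV⟩ := aux_diag P hP1 hP2
  have hcard2 : Fintype.card {i // ¬ p i} = l + 1 := by
    rw [Fintype.card_subtype_compl, hcard, hPr, Fintype.card_fin]
    omega
  obtain ⟨C, hC0, hCt, hC⟩ := aux_gauss p k l (hcard.trans hPr) hcard2
  have hI : ∫⁻ v : Fin D → ℂ, ENNReal.ofReal (Real.exp (-nsq v)) =
      C * ENNReal.ofReal ((Nat.factorial k * Nat.factorial l : ℝ) / Nat.factorial (k + l + 1)) := by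
    have := hC (fun _ => 1) measurable_const
    simp only [mul_one] at this
    rw [this, aux_beta_value]
  have hpos : 0 < ((Nat.factorial k * Nat.factorial l : ℝ) / Nat.factorial (k + l + 1)) := by
    positivity
  have h0 : ∫⁻ v : Fin D → ℂ, ENNReal.ofReal (Real.exp (-nsq v)) ≠ 0 := by
    rw [hI]
    exact mul_ne_zero hC0 (ENNReal.ofReal_pos.2 hpos).ne'
  have ht : ∫⁻ v : Fin D → ℂ, ENNReal.ofReal (Real.exp (-nsq v)) ≠ ⊤ := by
    rw [hI]
    exact ENNReal.mul_ne_top hCt ENNReal.ofReal_ne_top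
  have huniv : auxG D Set.univ =
      C * ENNReal.ofReal ((Nat.factorial k * Nat.factorial l : ℝ) / Nat.factorial (k + l + 1)) := by
    rw [auxG, withDensity_apply _ MeasurableSet.univ, Measure.restrict_univ, hI]
  have hfin : IsFiniteMeasure (auxG D) := ⟨by
    rw [huniv, ← hI]; exact ht.lt_top⟩
  have hne : Nonempty (Fin D) := ⟨⟨0, by omega⟩⟩
  have hG0 : auxG D {0} = 0 := withDensity_absolutelyContinuous _ _ (measure_singleton _)
  have hmn := aux_nsq_meas (D := D)
  set A : Set (Fin D → ℂ) := {v : Fin D → ℂ | nsq (P.mulVec v) / nsq v ∈ B} with hAd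
  have hA : MeasurableSet A :=
    ((hmn.comp (aux_mulVec_meas P)).div hmn) hB
  have hsc : ∀ (c : ℂ) (v : Fin D → ℂ), c ≠ 0 → v ∈ A → c • v ∈ A := by
    intro c v hc hv
    have hs : ∀ v : Fin D → ℂ, nsq (c • v) = ‖c‖ ^ 2 * nsq v := by
      intro v
      simp [nsq, mul_pow, Finset.mul_sum]
    have hc' : ‖c‖ ^ 2 ≠ 0 := by simpa using hc
    simp only [hAd, Set.mem_setOf_eq] at hv ⊢
    rwa [Matrix.mulVec_smul, hs, hs, mul_div_mul_left _ _ hc']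
  have hkey := aux_key μ (auxG D) (aux_G_inv h0 ht) hG0 A hA hsc φ hφ
  rw [huniv] at hkey
  have hGA : auxG D A = C * ∫⁻ u in Set.Ioo (0:ℝ) 1 ∩ B, ENNReal.ofReal (u ^ k * (1 - u) ^ l) := by
    let A0 : Set (Fin D → ℂ) := {v | (∑ i : {i // p i}, ‖v i‖ ^ 2) / nsq v ∈ B}
    have hA0 : MeasurableSet A0 := by
      have : Measurable fun v : Fin D → ℂ => (∑ i : {i // p i}, ‖v i‖ ^ 2) / nsq v := by
        fun_prop
      exact this hB
    have hpre : A = (fun v => (V : Matrix (Fin D) (Fin D) ℂ).mulVec v) ⁻¹' A0 := by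
      ext v
      simp only [hAd, A0, Set.mem_setOf_eq, Set.mem_preimage, hV, aux_nsq_unitary]
    rw [hpre, ← Measure.map_apply (aux_mulVec_meas _) hA0, aux_G_inv h0 ht, auxG,
      withDensity_apply _ hA0, ← lintegral_indicator hA0]
    have := hC (B.indicator fun _ => 1) (measurable_const.indicator hB)
    refine Eq.trans (Eq.trans (lintegral_congr fun v => ?_) this) ?_
    · by_cases hv : v ∈ A0
      · rw [Set.indicator_of_mem hv, Set.indicator_of_mem (by exact hv), mul_one]
      · rw [Set.indicator_of_notMem hv, Set.indicator_of_notMem (by exact hv), mul_zero]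
    · congr 1
      rw [Set.inter_comm, ← Measure.restrict_restrict hB, ← lintegral_indicator hB]
      refine lintegral_congr fun u => ?_
      by_cases hu : u ∈ B <;> simp [hu]
  rw [hGA] at hkey
  rw [mul_left_comm] at hkey
  exact ((ENNReal.mul_right_inj hC0 hCt).1 hkey).symm

theorem stmt12 (D d : ℕ) (hd1 : 1 < d) (hd2 : d + 1 < D)
    (P : Matrix (Fin D) (Fin D) ℂ) (hP1 : P * P = P) (hP2 : P.IsHermitian) (hPr : P.rank = d)
    (φ : Fin D → ℂ) (hφ : nsq φ = 1)
    (a : ℝ) (ha0 : 0 ≤ a) (ha1 : Real.sqrt a < d / D) (ha2 : Real.sqrt a + d / D < 1)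
    (μ : Measure (UG D)) [μ.IsHaarMeasure] [IsProbabilityMeasure μ]
    (w : Measure (Fin D → ℂ)) [IsProbabilityMeasure w]
    (hsupp : w {v : Fin D → ℂ | nsq v = 1}ᶜ = 0)
    (hinv : ∀ U : UG D,
      Measure.map (fun v => (U : Matrix (Fin D) (Fin D) ℂ).mulVec v) w = w) :
    (μ {U : UG D | a ≤ ((dotc φ ((rotProj U P).mulVec φ)).re - d / D) ^ 2}).toReal =
        (Nat.factorial (D - 1) : ℝ) / (Nat.factorial (d - 1) * Nat.factorial (D - d - 1)) *
          ∫ u in Set.Icc (0:ℝ) (d / D - Real.sqrt a) ∪ Set.Icc ((d : ℝ) / D + Real.sqrt a) 1,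
            u ^ (d - 1) * (1 - u) ^ (D - d - 1) ∧
      (w {v : Fin D → ℂ | a ≤ (nsq (P.mulVec v) - d / D) ^ 2}).toReal =
        (Nat.factorial (D - 1) : ℝ) / (Nat.factorial (d - 1) * Nat.factorial (D - d - 1)) *
          ∫ u in Set.Icc (0:ℝ) (d / D - Real.sqrt a) ∪ Set.Icc ((d : ℝ) / D + Real.sqrt a) 1,
            u ^ (d - 1) * (1 - u) ^ (D - d - 1) := by

  obtain ⟨k, rfl⟩ : ∃ k, d = k + 1 := ⟨d - 1, by omega⟩
  obtain ⟨l, hl⟩ : ∃ l, D = k + l + 2 := ⟨D - k - 2, by omega⟩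
  have hn1 : D - 1 = k + l + 1 := by omega
  have hn2 : D - (k + 1) - 1 = l := by omega
  rw [hn1, hn2, Nat.add_sub_cancel]
  set x : ℝ := ((k + 1 : ℕ) : ℝ) / D with hx
  set B : Set ℝ := {u | a ≤ (u - x) ^ 2} with hBd
  have hB : MeasurableSet B := measurableSet_le measurable_const (by fun_prop)
  have hmain := aux_main D k l hl.symm P hP1 hP2 hPr φ hφ B hB μ
  set A : Set (Fin D → ℂ) := {v : Fin D → ℂ | nsq (P.mulVec v) / nsq v ∈ B} with hAd
  set m := μ {U : UG D | ((U⁻¹ : UG D) : Matrix (Fin D) (Fin D) ℂ).mulVec φ ∈ A} with hm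
  have hmn := aux_nsq_meas (D := D)
  have hA : MeasurableSet A :=
    ((hmn.comp (aux_mulVec_meas P)).div hmn) hB
  have hsc : ∀ (c : ℂ) (v : Fin D → ℂ), c ≠ 0 → v ∈ A → c • v ∈ A := by
    intro c v hc hv
    have hs : ∀ v : Fin D → ℂ, nsq (c • v) = ‖c‖ ^ 2 * nsq v := by
      intro v
      simp [nsq, mul_pow, Finset.mul_sum]
    have hc' : ‖c‖ ^ 2 ≠ 0 := by simpa using hc
    simp only [hAd, Set.mem_setOf_eq] at hv ⊢
    rwa [Matrix.mulVec_smul, hs, hs, mul_div_mul_left _ _ hc']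
  have hset : Set.Icc (0:ℝ) (x - Real.sqrt a) ∪ Set.Icc (x + Real.sqrt a) 1 =
      Set.Icc 0 1 ∩ B := by
    have hsa := Real.sqrt_nonneg a
    have hiff : ∀ u : ℝ, a ≤ (u - x) ^ 2 ↔ u ≤ x - Real.sqrt a ∨ x + Real.sqrt a ≤ u := by
      intro u
      rw [← Real.sqrt_le_sqrt_iff (sq_nonneg _), Real.sqrt_sq_eq_abs, le_abs]
      constructor
      · rintro (h | h)
        · right; linarith
        · left; linarith
      · rintro (h | h)
        · right; linarith
        · left; linarith
    ext u
    simp only [Set.mem_union, Set.mem_inter_iff, Set.mem_Icc, hBd, Set.mem_setOf_eq, hiff]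
    constructor
    · rintro (⟨h1, h2⟩ | ⟨h1, h2⟩)
      · exact ⟨⟨h1, by linarith⟩, Or.inl h2⟩
      · exact ⟨⟨by linarith, h2⟩, Or.inr h1⟩
    · rintro ⟨⟨h1, h2⟩, h | h⟩
      · exact Or.inl ⟨h1, h⟩
      · exact Or.inr ⟨h, h2⟩
  have hint : ∫⁻ u in Set.Ioo (0:ℝ) 1 ∩ B, ENNReal.ofReal (u ^ k * (1 - u) ^ l) =
      ENNReal.ofReal (∫ u in Set.Icc (0:ℝ) 1 ∩ B, u ^ k * (1 - u) ^ l) := by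
    rw [ofReal_integral_eq_lintegral_ofReal]
    · refine setLIntegral_congr ?_
      exact (Ioo_ae_eq_Icc).inter (ae_eq_refl _)
    · refine IntegrableOn.mono_set ?_ Set.inter_subset_left
      exact ContinuousOn.integrableOn_compact isCompact_Icc (by fun_prop)
    · filter_upwards [self_mem_ae_restrict (measurableSet_Icc.inter hB)] with u hu
      have h1 := hu.1.1
      have h2 : 0 ≤ 1 - u := by linarith [hu.1.2]
      simp only [Pi.zero_apply]
      positivity
  have hnn : 0 ≤ ∫ u in Set.Icc (0:ℝ) 1 ∩ B, u ^ k * (1 - u) ^ l := by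
    refine setIntegral_nonneg (measurableSet_Icc.inter hB) fun u hu => ?_
    have h1 := hu.1.1
    have h2 : 0 ≤ 1 - u := by linarith [hu.1.2]
    positivity
  rw [hint] at hmain
  have hfin : m.toReal = (Nat.factorial (k + l + 1) : ℝ) / (Nat.factorial k * Nat.factorial l) *
      ∫ u in Set.Icc (0:ℝ) (x - Real.sqrt a) ∪ Set.Icc (x + Real.sqrt a) 1,
        u ^ k * (1 - u) ^ l := by
    rw [hset]
    have h := congrArg ENNReal.toReal hmain
    rw [ENNReal.toReal_mul, ENNReal.toReal_ofReal (by positivity), ENNReal.toReal_ofReal hnn] at h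
    rw [← h]
    have f1 : (Nat.factorial k : ℝ) ≠ 0 := by positivity
    have f2 : (Nat.factorial l : ℝ) ≠ 0 := by positivity
    have f3 : (Nat.factorial (k + l + 1) : ℝ) ≠ 0 := by positivity
    field_simp
  constructor
  · rw [← hfin, hm]
    congr 2
    ext U
    simp only [Set.mem_setOf_eq, hAd, hBd]
    rw [aux_rot P hP1 hP2, aux_nsq_unitary, hφ, div_one]
  · rw [← hfin]
    have hw0 : w {0} = 0 := by
      refine measure_mono_null ?_ hsupp
      intro v hv
      rw [Set.mem_singleton_iff] at hv
      simp [hv, nsq]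
    have hkey := aux_key μ w hinv hw0 A hA hsc φ hφ
    rw [measure_univ, mul_one] at hkey
    rw [hm, ← hkey]
    congr 1
    refine measure_congr ?_
    have hae : ∀ᵐ v ∂w, nsq v = 1 := hsupp
    filter_upwards [hae] with v hv
    change (a ≤ (nsq (P.mulVec v) - x) ^ 2) = (a ≤ (nsq (P.mulVec v) / nsq v - x) ^ 2)
    rw [hv, div_one]
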